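/- Let Y be a Banach space, A, B bounded linear operators on Y with AB = BA, 1 < α < 2, 0 < β < 1, η, η̂ ∈ Y, and let g : [0,∞) → Y be continuous. Define x(t) = η + ( ∑_{k,m≥0} C(k+m,m) A^{k} B^{m+1} t^{k(α−β)+mα+α} / Γ(k(α−β)+mα+α+1) ) η + ( ∑_{k,m≥0} C(k+m,m) A^{k} B^{m} t^{k(α−β)+mα+1} / Γ(k(α−β)+mα+2) ) η̂ + ∫₀ᵗ [ ∑_{k,m≥0} C(k+m,m) A^{k} B^{m} (t−s)^{k(α−β)+mα+α−1} / Γ(k(α−β)+mα+α) ] g(s) ds. Then x(0) = η, x is differentiable with x′(0) = η̂, the Caputo fractional derivatives (ᶜD^{α}x)(t) and (ᶜD^{β}x)(t) exist for every t > 0, and x satisfies (ᶜD^{α}x)(t) − A(ᶜD^{β}x)(t) = B x(t) + g(t) for all t > 0. -/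

import Mathlib

open MeasureTheory

namespace FracAux

/-- Riemann–Liouville integral in rescaled form. -/
noncomputable def J {Y : Type*} [NormedAddCommGroup Y] [NormedSpace ℝ Y]
    (γ : ℝ) (f : ℝ → Y) (t : ℝ) : Y :=
  (t ^ γ / Real.Gamma γ) • ∫ u in (0:ℝ)..1, (u ^ (γ - 1)) • f (t * (1 - u))

lemma beta_real {γ δ b : ℝ} (hγ : 0 < γ) (hδ : 0 < δ) (hb : 0 < b) :
    ∫ u in (0:ℝ)..b, u ^ (γ - 1) * (b - u) ^ (δ - 1)
      = b ^ (γ + δ - 1) * (Real.Gamma γ * Real.Gamma δ / Real.Gamma (γ + δ)) := by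
  have h := Complex.betaIntegral_scaled (γ : ℂ) (δ : ℂ) hb
  rw [Complex.betaIntegral_eq_Gamma_mul_div _ _ (by simpa) (by simpa)] at h
  apply Complex.ofReal_injective
  rw [← intervalIntegral.integral_ofReal]
  push_cast
  rw [Complex.ofReal_cpow hb.le]
  simp only [← Complex.Gamma_ofReal]
  push_cast
  rw [← h]
  refine intervalIntegral.integral_congr fun u hu => ?_
  rw [Set.uIcc_of_le hb.le] at hu
  rw [Complex.ofReal_cpow hu.1, Complex.ofReal_cpow (by linarith [hu.2])]
  push_cast
  rfl

lemma pow_int {γ : ℝ} (hγ : 0 < γ) :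
    IntervalIntegrable (fun u : ℝ => u ^ (γ - 1)) volume 0 1 :=
  intervalIntegral.intervalIntegrable_rpow' (by linarith)

lemma pow_int_val {γ : ℝ} (hγ : 0 < γ) : ∫ u in (0:ℝ)..1, u ^ (γ - 1) = 1 / γ := by
  rw [integral_rpow (Or.inl (by linarith))]
  have : γ - 1 + 1 = γ := by ring
  rw [this, Real.one_rpow, Real.zero_rpow hγ.ne']; simp

variable {Y : Type*} [NormedAddCommGroup Y] [NormedSpace ℝ Y]

lemma integrand_int {γ : ℝ} (hγ : 0 < γ) {f : ℝ → Y} (hf : Continuous f) (t : ℝ) :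
    IntervalIntegrable (fun u : ℝ => (u ^ (γ - 1)) • f (t * (1 - u))) volume 0 1 :=
  (pow_int hγ).smul_continuousOn (by fun_prop)

lemma exists_bd {Y : Type*} [NormedAddCommGroup Y] {f : ℝ → Y} (hf : Continuous f) (T : ℝ) :
    ∃ M, 0 ≤ M ∧ ∀ s, |s| ≤ T → ‖f s‖ ≤ M := by
  obtain ⟨M, hM⟩ := (isCompact_Icc (a := -T) (b := T)).exists_bound_of_continuousOn
    hf.continuousOn
  refine ⟨max M 0, le_max_right _ _, fun s hs => (hM s (abs_le.1 hs)).trans (le_max_left _ _)⟩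

lemma abs_aux {t u : ℝ} (hu : u ∈ Set.Ioc (0:ℝ) 1) : |t * (1 - u)| ≤ |t| := by
  rw [abs_mul]
  have : |1 - u| ≤ 1 := by rw [abs_le]; constructor <;> linarith [hu.1, hu.2]
  exact mul_le_of_le_one_right (abs_nonneg _) this

lemma J_bound {γ : ℝ} (hγ : 0 < γ) {f : ℝ → Y} {t M : ℝ}
    (hM : ∀ s, |s| ≤ |t| → ‖f s‖ ≤ M) :
    ‖J γ f t‖ ≤ |t| ^ γ / Real.Gamma (γ + 1) * M := by
  have hG := Real.Gamma_pos_of_pos hγ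
  have h1 : ‖∫ u in (0:ℝ)..1, (u ^ (γ - 1)) • f (t * (1 - u))‖
      ≤ ∫ u in (0:ℝ)..1, u ^ (γ - 1) * M := by
    refine intervalIntegral.norm_integral_le_of_norm_le zero_le_one ?_
      ((pow_int hγ).mul_const M)
    refine Filter.Eventually.of_forall fun u hu => ?_
    rw [norm_smul, Real.norm_of_nonneg (Real.rpow_nonneg hu.1.le _)]
    exact mul_le_mul_of_nonneg_left (hM _ (abs_aux hu)) (Real.rpow_nonneg hu.1.le _)
  rw [intervalIntegral.integral_mul_const, pow_int_val hγ] at h1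
  rw [J, norm_smul, norm_div, Real.norm_of_nonneg hG.le, Real.Gamma_add_one hγ.ne']
  have h2 : ‖t ^ γ‖ ≤ |t| ^ γ := Real.abs_rpow_le_abs_rpow t γ
  have h3 : |t| ^ γ / (γ * Real.Gamma γ) * M = |t| ^ γ / Real.Gamma γ * (1 / γ * M) := by
    field_simp
  rw [h3]
  have : 0 ≤ |t| ^ γ := Real.rpow_nonneg (abs_nonneg _) _
  gcongr

lemma J_cont {γ : ℝ} (hγ : 0 < γ) {f : ℝ → Y} (hf : Continuous f) : Continuous (J γ f) := by
  have h1 : Continuous fun t : ℝ => ∫ u in (0:ℝ)..1, (u ^ (γ - 1)) • f (t * (1 - u)) := by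
    rw [continuous_iff_continuousAt]
    intro t₀
    obtain ⟨M, hM0, hM⟩ := exists_bd hf (|t₀| + 1)
    refine intervalIntegral.continuousAt_of_dominated_interval
      (bound := fun u => u ^ (γ - 1) * M) ?_ ?_ ((pow_int hγ).mul_const M) ?_
    · refine Filter.Eventually.of_forall fun t => ?_
      have := (integrand_int hγ hf t).aestronglyMeasurable
      simpa [Set.uIoc_of_le (zero_le_one (α := ℝ))] using this
    · have : ∀ᶠ t in nhds t₀, |t| < |t₀| + 1 :=
        continuous_abs.continuousAt.eventually_lt continuousAt_const (by linarith)
      filter_upwards [this] with t ht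
      refine Filter.Eventually.of_forall fun u hu => ?_
      rw [Set.uIoc_of_le zero_le_one] at hu
      rw [norm_smul, Real.norm_of_nonneg (Real.rpow_nonneg hu.1.le _)]
      exact mul_le_mul_of_nonneg_left (hM _ ((abs_aux hu).trans ht.le))
        (Real.rpow_nonneg hu.1.le _)
    · refine Filter.Eventually.of_forall fun u hu => ?_
      fun_prop
  unfold J
  exact ((Real.continuous_rpow_const hγ.le).div_const _).smul h1

lemma J_zero {γ : ℝ} (hγ : 0 < γ) (f : ℝ → Y) : J γ f 0 = 0 := by
  simp [J, Real.zero_rpow hγ.ne']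

lemma J_add {γ : ℝ} (hγ : 0 < γ) {f g : ℝ → Y} (hf : Continuous f) (hg : Continuous g) (t : ℝ) :
    J γ (fun s => f s + g s) t = J γ f t + J γ g t := by
  simp only [J, smul_add]
  rw [intervalIntegral.integral_add (integrand_int hγ hf t) (integrand_int hγ hg t), smul_add]

lemma J_clm [CompleteSpace Y] {γ : ℝ} (hγ : 0 < γ) {f : ℝ → Y} (hf : Continuous f)
    (L : Y →L[ℝ] Y) (t : ℝ) :
    J γ (fun s => L (f s)) t = L (J γ f t) := by
  simp only [J, map_smul]
  rw [← ContinuousLinearMap.intervalIntegral_comp_comm L (integrand_int hγ hf t)]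
  simp

lemma J_const [CompleteSpace Y] {γ : ℝ} (hγ : 0 < γ) (y : Y) (t : ℝ) :
    J γ (fun _ => y) t = (t ^ γ / Real.Gamma (γ + 1)) • y := by
  simp only [J]
  rw [intervalIntegral.integral_smul_const, pow_int_val hγ, smul_smul,
    Real.Gamma_add_one hγ.ne']
  congr 1
  field_simp

lemma J_congr {γ : ℝ} {f g : ℝ → Y} {t : ℝ} (ht : 0 ≤ t)
    (h : ∀ s, 0 ≤ s → f s = g s) : J γ f t = J γ g t := by
  simp only [J]
  congr 1
  refine intervalIntegral.integral_congr fun u hu => ?_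
  rw [Set.uIcc_of_le zero_le_one] at hu
  rw [h _ (mul_nonneg ht (by linarith [hu.2]))]

lemma J_eq {γ : ℝ} (hγ : 0 < γ) (f : ℝ → Y) {t : ℝ} (ht : 0 ≤ t) :
    (Real.Gamma γ)⁻¹ • ∫ s in (0:ℝ)..t, ((t - s) ^ (γ - 1)) • f s = J γ f t := by
  rcases ht.eq_or_lt with rfl | ht
  · simp [J_zero hγ]
  have h := intervalIntegral.integral_comp_sub_mul (a := 0) (b := 1)
    (fun s => ((t - s) ^ (γ - 1)) • f s) ht.ne' t
  simp only [mul_one, sub_self, mul_zero, sub_zero] at h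
  have h2 : ∫ s in (0:ℝ)..t, ((t - s) ^ (γ - 1)) • f s
      = t • ∫ u in (0:ℝ)..1, ((t - (t - t * u)) ^ (γ - 1)) • f (t - t * u) := by
    rw [h, smul_smul, mul_inv_cancel₀ ht.ne', one_smul]
  rw [h2, J]
  have h3 : ∫ u in (0:ℝ)..1, ((t - (t - t * u)) ^ (γ - 1)) • f (t - t * u)
      = t ^ (γ - 1) • ∫ u in (0:ℝ)..1, (u ^ (γ - 1)) • f (t * (1 - u)) := by
    rw [← intervalIntegral.integral_smul]
    refine intervalIntegral.integral_congr fun u hu => ?_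
    rw [Set.uIcc_of_le zero_le_one] at hu
    rw [sub_sub_cancel, Real.mul_rpow ht.le hu.1, smul_smul, mul_sub, mul_one]
  rw [h3, smul_smul, smul_smul]
  congr 1
  rw [Real.rpow_sub_one ht.ne']
  field_simp

lemma J_one (f : ℝ → Y) {t : ℝ} (ht : 0 ≤ t) : J 1 f t = ∫ s in (0:ℝ)..t, f s := by
  rw [← J_eq one_pos f ht]; simp

/-- truncated kernel -/
noncomputable def ker (γ : ℝ) : ℝ → ℝ := (Set.Ioc 0 1).indicator fun u => u ^ (γ - 1)

lemma ker_int {γ : ℝ} (hγ : 0 < γ) : Integrable (ker γ) := by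
  rw [ker, integrable_indicator_iff measurableSet_Ioc]
  exact (intervalIntegrable_iff_integrableOn_Ioc_of_le zero_le_one).1 (pow_int hγ)

lemma ker_conv {γ δ b : ℝ} (hγ : 0 < γ) (hδ : 0 < δ) (hb : b ∈ Set.Ioc (0:ℝ) 1) :
    ∫ u, ker γ u * ker δ (b - u)
      = b ^ (γ + δ - 1) * (Real.Gamma γ * Real.Gamma δ / Real.Gamma (γ + δ)) := by
  rw [← beta_real hγ hδ hb.1, intervalIntegral.integral_of_le hb.1.le,
    integral_Ioc_eq_integral_Ioo, ← integral_indicator measurableSet_Ioo]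
  congr 1
  ext u
  by_cases hu : u ∈ Set.Ioo 0 b
  · rw [Set.indicator_of_mem hu, ker, ker, Set.indicator_of_mem, Set.indicator_of_mem]
    · constructor <;> linarith [hu.1, hu.2, hb.2]
    · constructor <;> linarith [hu.1, hu.2, hb.2]
  · rw [Set.indicator_of_notMem hu]
    by_cases h0 : 0 < u
    · have : b ≤ u := by by_contra h; exact hu ⟨h0, not_le.1 h⟩
      rw [ker, ker, Set.indicator_of_notMem (a := b - u), mul_zero]
      intro h; linarith [h.1]
    · rw [ker, Set.indicator_of_notMem, zero_mul]
      intro h; exact h0 h.1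

lemma J_inner {δ : ℝ} (hδ : 0 < δ) (f : ℝ → Y) {t u : ℝ} (ht : 0 ≤ t)
    (hu : u ∈ Set.Ioc (0:ℝ) 1) :
    J δ f (t * (1 - u)) = (t ^ δ / Real.Gamma δ) •
      ∫ b, ker δ (b - u) • (Set.Ioc (0:ℝ) 1).indicator (fun b => f (t * (1 - b))) b := by
  have h0 : 0 ≤ 1 - u := by linarith [hu.2]
  rw [show (∫ b, ker δ (b - u) • (Set.Ioc (0:ℝ) 1).indicator (fun b => f (t * (1 - b))) b)
      = ∫ b in u..1, ((b - u) ^ (δ - 1)) • f (t * (1 - b)) from ?_]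
  · rcases h0.eq_or_lt with h | h
    · have : u = 1 := by linarith
      subst this
      simp [J_zero hδ]
    have h2 := intervalIntegral.integral_comp_mul_add (a := 0) (b := 1)
      (fun b => ((b - u) ^ (δ - 1)) • f (t * (1 - b))) h.ne' u
    simp only [mul_zero, zero_add, mul_one, sub_add_cancel] at h2
    have h3 : ∫ b in u..1, ((b - u) ^ (δ - 1)) • f (t * (1 - b))
        = (1 - u) • ∫ w in (0:ℝ)..1, (((1 - u) * w + u - u) ^ (δ - 1)) •
          f (t * (1 - ((1 - u) * w + u))) := by
      rw [h2, smul_smul, mul_inv_cancel₀ h.ne', one_smul]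
    have h4 : ∫ w in (0:ℝ)..1, (((1 - u) * w + u - u) ^ (δ - 1)) •
          f (t * (1 - ((1 - u) * w + u)))
        = (1 - u) ^ (δ - 1) • ∫ w in (0:ℝ)..1, (w ^ (δ - 1)) • f (t * (1 - u) * (1 - w)) := by
      rw [← intervalIntegral.integral_smul]
      refine intervalIntegral.integral_congr fun w hw => ?_
      rw [Set.uIcc_of_le zero_le_one] at hw
      rw [add_sub_cancel_right, Real.mul_rpow h.le hw.1, smul_smul]
      congr 2
      ring
    rw [h3, h4, J, smul_smul, smul_smul]
    congr 1
    rw [Real.rpow_sub_one h.ne', Real.mul_rpow ht h.le]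
    field_simp
  · rw [intervalIntegral.integral_of_le hu.2, ← integral_indicator measurableSet_Ioc]
    congr 1
    ext b
    by_cases hb : b ∈ Set.Ioc u 1
    · rw [Set.indicator_of_mem hb, ker, Set.indicator_of_mem, Set.indicator_of_mem]
      · constructor <;> linarith [hu.1, hu.2, hb.1, hb.2]
      · constructor <;> linarith [hu.1, hu.2, hb.1, hb.2]
    · rw [Set.indicator_of_notMem hb]
      by_cases h1 : b ≤ 1
      · rw [ker, Set.indicator_of_notMem, zero_smul]
        intro h; exact hb ⟨by linarith [h.1], h1⟩
      · rw [Set.indicator_of_notMem (a := b), smul_zero]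
        intro h; exact h1 h.2

lemma J_semigroup [CompleteSpace Y] {γ δ : ℝ} (hγ : 0 < γ) (hδ : 0 < δ) {f : ℝ → Y}
    (hf : Continuous f) {t : ℝ} (ht : 0 ≤ t) :
    J γ (J δ f) t = J (γ + δ) f t := by
  rcases ht.eq_or_lt with rfl | ht'
  · rw [J_zero hγ, J_zero (add_pos hγ hδ)]
  set Φ : ℝ → Y := (Set.Ioc (0:ℝ) 1).indicator (fun b => f (t * (1 - b))) with hΦ
  have hG1 := Real.Gamma_pos_of_pos hγ
  have hG2 := Real.Gamma_pos_of_pos hδ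
  have e1 : ∫ u in (0:ℝ)..1, (u ^ (γ - 1)) • J δ f (t * (1 - u))
      = (t ^ δ / Real.Gamma δ) • ∫ u, ∫ b, (ker γ u * ker δ (b - u)) • Φ b := by
    rw [intervalIntegral.integral_of_le zero_le_one, ← integral_indicator measurableSet_Ioc,
      ← integral_smul]
    congr 1
    ext u
    by_cases hu : u ∈ Set.Ioc (0:ℝ) 1
    · rw [Set.indicator_of_mem hu, J_inner hδ f ht hu, smul_comm, ← integral_smul]
      congr 1
      congr 1
      ext b
      rw [smul_smul, show ker γ u = u ^ (γ - 1) from Set.indicator_of_mem hu _]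
    · rw [Set.indicator_of_notMem hu]
      simp [ker, Set.indicator_of_notMem hu]
  obtain ⟨M, hM0, hM⟩ := exists_bd hf |t|
  have hΦm : AEStronglyMeasurable Φ volume :=
    (Continuous.aestronglyMeasurable (by fun_prop)).indicator measurableSet_Ioc
  have hΦb : ∀ b, ‖Φ b‖ ≤ M := by
    intro b
    by_cases hb : b ∈ Set.Ioc (0:ℝ) 1
    · rw [hΦ, Set.indicator_of_mem hb]; exact hM _ (abs_aux hb)
    · rw [hΦ, Set.indicator_of_notMem hb]; simpa
  have hint : Integrable (fun p : ℝ × ℝ => (ker γ p.2 * ker δ (p.1 - p.2)) • Φ p.1)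
      (volume.prod volume) := by
    have := (ker_int hγ).convolution_integrand (ContinuousLinearMap.mul ℝ ℝ) (ker_int hδ)
    simp only [ContinuousLinearMap.mul_apply'] at this
    exact this.smul_bdd M hΦm.comp_fst (Filter.Eventually.of_forall fun p => hΦb p.1)
  have e2 : ∫ u, ∫ b, (ker γ u * ker δ (b - u)) • Φ b
      = ∫ b, ∫ u, (ker γ u * ker δ (b - u)) • Φ b :=
    (integral_integral_swap (f := fun b u => (ker γ u * ker δ (b - u)) • Φ b) hint).symm
  have e3 : ∫ b, ∫ u, (ker γ u * ker δ (b - u)) • Φ b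
      = (Real.Gamma γ * Real.Gamma δ / Real.Gamma (γ + δ)) •
        ∫ b in (0:ℝ)..1, (b ^ (γ + δ - 1)) • f (t * (1 - b)) := by
    rw [intervalIntegral.integral_of_le zero_le_one, ← integral_indicator measurableSet_Ioc,
      ← integral_smul]
    congr 1
    ext b
    rw [integral_smul_const]
    by_cases hb : b ∈ Set.Ioc (0:ℝ) 1
    · rw [hΦ, Set.indicator_of_mem hb, Set.indicator_of_mem hb, ker_conv hγ hδ hb, smul_smul,
        mul_comm]
    · rw [hΦ, Set.indicator_of_notMem hb, Set.indicator_of_notMem hb, smul_zero, smul_zero]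
  rw [J, e1, e2, e3, J, smul_smul, smul_smul]
  congr 1
  rw [Real.rpow_add ht']
  field_simp

lemma gamma_lower {R x : ℝ} (hR : 0 < R) (hx : 0 < x) :
    R ^ x * Real.exp (-R) ≤ Real.Gamma (x + 1) := by
  rw [Real.Gamma_eq_integral (by linarith), add_sub_cancel_right]
  have hI := Real.GammaIntegral_convergent (s := x + 1) (by linarith)
  rw [add_sub_cancel_right] at hI
  have h1 : ∫ s in Set.Ioi R, Real.exp (-s) * s ^ x ≤ ∫ s in Set.Ioi 0, Real.exp (-s) * s ^ x := by
    refine setIntegral_mono_set hI ?_ (Set.Ioi_subset_Ioi hR.le).eventuallyLE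
    filter_upwards [ae_restrict_mem measurableSet_Ioi] with s hs
    exact mul_nonneg (Real.exp_pos _).le (Real.rpow_nonneg (le_of_lt hs) _)
  refine le_trans ?_ h1
  rw [← integral_exp_neg_Ioi R, mul_comm, ← integral_mul_const]
  refine setIntegral_mono_on ((integrableOn_exp_neg_Ioi R).mul_const _)
    (hI.mono_set (Set.Ioi_subset_Ioi hR.le)) measurableSet_Ioi fun s hs => ?_
  exact mul_le_mul_of_nonneg_left (Real.rpow_le_rpow hR.le (le_of_lt hs) hx.le)
    (Real.exp_pos _).le

lemma gamma_inv_le {r : ℝ} (hr : 0 < r) :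
    ∃ C, 0 < C ∧ ∀ x, 0 < x → (Real.Gamma x)⁻¹ ≤ C * r ^ x := by
  refine ⟨Real.exp (Real.exp 1 / r), Real.exp_pos _, fun x hx => ?_⟩
  have hR : 0 < Real.exp 1 / r := div_pos (Real.exp_pos _) hr
  have h1 := gamma_lower hR hx
  have hG := Real.Gamma_pos_of_pos hx
  rw [Real.Gamma_add_one hx.ne', Real.div_rpow (Real.exp_pos _).le hr.le, ← Real.exp_mul, one_mul,
    Real.exp_neg] at h1
  have h2 : x ≤ Real.exp x := by linarith [Real.add_one_le_exp x]
  have hrx : 0 < r ^ x := Real.rpow_pos_of_pos hr x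
  have hE := Real.exp_pos (Real.exp 1 / r)
  have h3 : Real.exp x / r ^ x * (Real.exp (Real.exp 1 / r))⁻¹ ≤ Real.exp x * Real.Gamma x :=
    h1.trans (mul_le_mul_of_nonneg_right h2 hG.le)
  have h4 : (r ^ x)⁻¹ * (Real.exp (Real.exp 1 / r))⁻¹ ≤ Real.Gamma x := by
    have := Real.exp_pos x
    refine le_of_mul_le_mul_left ?_ this
    calc _ = Real.exp x / r ^ x * (Real.exp (Real.exp 1 / r))⁻¹ := by ring
      _ ≤ _ := h3
  rw [inv_le_comm₀ hG (by positivity), mul_inv, mul_comm]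
  exact h4

/-- the exponent -/
noncomputable def rho (c d : ℝ) (p : ℕ × ℕ) : ℝ := (p.1 : ℝ) * c + (p.2 : ℝ) * d

/-- the binomial weight -/
noncomputable def W (p : ℕ × ℕ) : ℝ := ((p.1 + p.2).choose p.2 : ℝ)

lemma W_nonneg (p : ℕ × ℕ) : 0 ≤ W p := Nat.cast_nonneg _

lemma rho_nonneg {c d : ℝ} (hc : 0 < c) (hd : 0 < d) (p : ℕ × ℕ) : 0 ≤ rho c d p := by
  unfold rho; positivity

lemma exists_small {a c T : ℝ} (hc : 0 < c) :
    ∀ᶠ r in nhdsWithin (0:ℝ) (Set.Ioi 0), a * (T * r) ^ c < 1 / 4 := by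
  have h : ContinuousAt (fun r : ℝ => a * (T * r) ^ c) 0 := by
    have := Real.continuous_rpow_const hc.le
    exact (continuous_const.mul (this.comp (continuous_const.mul continuous_id))).continuousAt
  have h2 : ∀ᶠ r in nhds (0:ℝ), a * (T * r) ^ c < 1 / 4 :=
    h.eventually_lt continuousAt_const (by simp [Real.zero_rpow hc.ne'])
  exact h2.filter_mono nhdsWithin_le_nhds

lemma summ {c d a b T δ : ℝ} (σ : ℝ) (hc : 0 < c) (hd : 0 < d) (ha : 0 ≤ a) (hb : 0 ≤ b)
    (hT : 0 < T) (hδ : 0 < δ) :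
    Summable fun p : ℕ × ℕ => W p * (a ^ p.1 * b ^ p.2) *
      (T ^ (rho c d p + σ) / Real.Gamma (rho c d p + δ)) := by
  obtain ⟨r, ⟨h1, h2⟩, hr⟩ := ((exists_small (a := a) (T := T) hc).and
    (exists_small (a := b) (T := T) hd) |>.and self_mem_nhdsWithin).exists
  replace hr : 0 < r := hr
  obtain ⟨C, hC, hCG⟩ := gamma_inv_le hr
  have hs : Summable fun p : ℕ × ℕ => ((1/2:ℝ) ^ p.1 * (1/2:ℝ) ^ p.2) * (C * T ^ σ * r ^ δ) :=
    (summable_geometric_two.mul_of_nonneg summable_geometric_two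
      (fun _ => by positivity) (fun _ => by positivity)).mul_right _
  refine Summable.of_nonneg_of_le (fun p => ?_) (fun p => ?_) hs
  · have := Real.Gamma_pos_of_pos (add_pos_of_nonneg_of_pos (rho_nonneg hc hd p) hδ)
    have := W_nonneg p
    positivity
  · have hG := hCG _ (add_pos_of_nonneg_of_pos (rho_nonneg hc hd p) hδ)
    have hW : W p ≤ 2 ^ p.1 * 2 ^ p.2 := by
      rw [← pow_add]
      unfold W
      exact_mod_cast Nat.choose_le_two_pow _ _
    have hW0 := W_nonneg p
    have hTr : 0 < T * r := mul_pos hT hr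
    have e1 : (T * r) ^ rho c d p = ((T * r) ^ c) ^ p.1 * ((T * r) ^ d) ^ p.2 := by
      rw [rho, Real.rpow_add hTr, mul_comm _ c, mul_comm _ d, Real.rpow_mul_natCast hTr.le,
        Real.rpow_mul_natCast hTr.le]
    have hx : 0 ≤ (T * r) ^ c := Real.rpow_nonneg hTr.le _
    have hy : 0 ≤ (T * r) ^ d := Real.rpow_nonneg hTr.le _
    calc W p * (a ^ p.1 * b ^ p.2) * (T ^ (rho c d p + σ) / Real.Gamma (rho c d p + δ))
        ≤ (2 ^ p.1 * 2 ^ p.2) * (a ^ p.1 * b ^ p.2) *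
          (T ^ (rho c d p + σ) * (C * r ^ (rho c d p + δ))) := by
          rw [div_eq_mul_inv]
          have h0 := (inv_pos.2 (Real.Gamma_pos_of_pos
            (add_pos_of_nonneg_of_pos (rho_nonneg hc hd p) hδ))).le
          gcongr
      _ = ((2 * (a * (T * r) ^ c)) ^ p.1 * (2 * (b * (T * r) ^ d)) ^ p.2) *
          (C * T ^ σ * r ^ δ) := by
          rw [Real.rpow_add hT, Real.rpow_add hr]
          have : T ^ rho c d p * r ^ rho c d p = ((T * r) ^ c) ^ p.1 * ((T * r) ^ d) ^ p.2 := by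
            rw [← e1, Real.mul_rpow hT.le hr.le]
          simp only [mul_pow]
          linear_combination (2 ^ p.1 * 2 ^ p.2 * (a ^ p.1 * b ^ p.2) * C * T ^ σ * r ^ δ) * this
      _ ≤ _ := by
          have : 2 * (a * (T * r) ^ c) ≤ 1 / 2 := by linarith
          have : 2 * (b * (T * r) ^ d) ≤ 1 / 2 := by linarith
          gcongr

lemma op_bound (A B : Y →L[ℝ] Y) (k m : ℕ) (y : Y) :
    ‖(A ^ k * B ^ m) y‖ ≤ ‖A‖ ^ k * ‖B‖ ^ m * ‖y‖ := by
  have h : ∀ (L : Y →L[ℝ] Y) (n : ℕ) (z : Y), ‖(L ^ n) z‖ ≤ ‖L‖ ^ n * ‖z‖ := by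
    intro L n
    induction n with
    | zero => intro z; simp
    | succ n ih =>
      intro z
      rw [pow_succ, mul_apply_eq_comp, pow_succ, mul_assoc]
      exact (ih _).trans (mul_le_mul_of_nonneg_left (L.le_opNorm z) (by positivity))
  rw [mul_apply_eq_comp, mul_assoc]
  exact (h A k _).trans (mul_le_mul_of_nonneg_left (h B m y) (by positivity))

/-- general term -/
noncomputable def Tm (c d : ℝ) (A B : Y →L[ℝ] Y) (δ : ℝ) (f : ℝ → Y) (p : ℕ × ℕ) (t : ℝ) : Y :=
  W p • ((A ^ p.1 * B ^ p.2) (J (rho c d p + δ) f t))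

/-- the sum -/
noncomputable def S (c d : ℝ) (A B : Y →L[ℝ] Y) (δ : ℝ) (f : ℝ → Y) (t : ℝ) : Y :=
  ∑' p, Tm c d A B δ f p t

/-- the bound -/
noncomputable def bd (c d : ℝ) (A B : Y →L[ℝ] Y) (δ T : ℝ) (p : ℕ × ℕ) : ℝ :=
  W p * (‖A‖ ^ p.1 * ‖B‖ ^ p.2) * (T ^ (rho c d p + δ) / Real.Gamma (rho c d p + (δ + 1)))

section
variable {c d δ : ℝ} (hc : 0 < c) (hd : 0 < d) (hδ : 0 < δ) (A B : Y →L[ℝ] Y)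

lemma bd_summable {T : ℝ} (hc : 0 < c) (hd : 0 < d) (hδ : 0 < δ) (hT : 0 < T) :
    Summable (bd c d A B δ T) :=
  summ δ hc hd (norm_nonneg _) (norm_nonneg _) hT (by linarith)

lemma Tm_bound (hc : 0 < c) (hd : 0 < d) (hδ : 0 < δ) {f : ℝ → Y} {T M t : ℝ}
    (hM : ∀ s, |s| ≤ T → ‖f s‖ ≤ M) (ht : |t| ≤ T) (p : ℕ × ℕ) :
    ‖Tm c d A B δ f p t‖ ≤ bd c d A B δ T p * M := by
  have hρ := rho_nonneg hc hd p
  have hM0 : 0 ≤ M := (norm_nonneg _).trans (hM t ht)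
  have h1 := J_bound (γ := rho c d p + δ) (by linarith) (f := f) (t := t) (M := M)
    (fun s hs => hM s (hs.trans ht))
  have hG := Real.Gamma_pos_of_pos (show 0 < rho c d p + δ + 1 by linarith)
  have hW := W_nonneg p
  rw [Tm, norm_smul, Real.norm_of_nonneg hW, bd, ← add_assoc]
  calc _ ≤ W p * (‖A‖ ^ p.1 * ‖B‖ ^ p.2 *
        (|t| ^ (rho c d p + δ) / Real.Gamma (rho c d p + δ + 1) * M)) := by
        refine mul_le_mul_of_nonneg_left ((op_bound A B _ _ _).trans ?_) hW
        gcongr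
    _ ≤ W p * (‖A‖ ^ p.1 * ‖B‖ ^ p.2 *
        (T ^ (rho c d p + δ) / Real.Gamma (rho c d p + δ + 1) * M)) := by
        have h0 := abs_nonneg t
        gcongr
    _ = _ := by ring

lemma Tm_cont (hc : 0 < c) (hd : 0 < d) (hδ : 0 < δ) {f : ℝ → Y} (hf : Continuous f) (p : ℕ × ℕ) :
    Continuous (Tm c d A B δ f p) := by
  have h := J_cont (γ := rho c d p + δ) (by linarith [rho_nonneg hc hd p]) hf
  unfold Tm
  exact ((A ^ p.1 * B ^ p.2).continuous.comp h).const_smul _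

variable [CompleteSpace Y]

lemma S_hasSum (hc : 0 < c) (hd : 0 < d) (hδ : 0 < δ) {f : ℝ → Y} (hf : Continuous f) (t : ℝ) :
    HasSum (fun p => Tm c d A B δ f p t) (S c d A B δ f t) := by
  obtain ⟨M, hM0, hM⟩ := exists_bd hf (|t| + 1)
  refine Summable.hasSum (Summable.of_norm_bounded
    ((bd_summable A B hc hd hδ (T := |t| + 1) (by positivity)).mul_right M) fun p => ?_)
  exact Tm_bound A B hc hd hδ hM (by linarith) p

lemma S_cont (hc : 0 < c) (hd : 0 < d) (hδ : 0 < δ) {f : ℝ → Y} (hf : Continuous f) :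
    Continuous (S c d A B δ f) := by
  rw [continuous_iff_continuousAt]
  intro t₀
  obtain ⟨M, hM0, hM⟩ := exists_bd hf (|t₀| + 1)
  have h : ContinuousOn (S c d A B δ f) {t | |t| ≤ |t₀| + 1} := by
    unfold S
    refine continuousOn_tsum (fun p => (Tm_cont A B hc hd hδ hf p).continuousOn)
      ((bd_summable A B hc hd hδ (T := |t₀| + 1) (by positivity)).mul_right M) fun p t ht => ?_
    exact Tm_bound A B hc hd hδ hM ht p
  refine h.continuousAt ?_
  have : ∀ᶠ t in nhds t₀, |t| < |t₀| + 1 :=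
    continuous_abs.continuousAt.eventually_lt continuousAt_const (by linarith)
  filter_upwards [this] with t ht using ht.le

lemma S_zero (hc : 0 < c) (hd : 0 < d) (hδ : 0 < δ) (f : ℝ → Y) : S c d A B δ f 0 = 0 := by
  unfold S Tm
  have : ∀ p, J (rho c d p + δ) f 0 = 0 := fun p =>
    J_zero (by linarith [rho_nonneg hc hd p]) f
  simp [this]

lemma S_add (hc : 0 < c) (hd : 0 < d) (hδ : 0 < δ) {f g : ℝ → Y} (hf : Continuous f)
    (hg : Continuous g) (t : ℝ) :
    S c d A B δ (fun s => f s + g s) t = S c d A B δ f t + S c d A B δ g t := by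
  have h := (S_hasSum A B hc hd hδ hf t).add (S_hasSum A B hc hd hδ hg t)
  rw [← h.tsum_eq, S]
  congr 1
  ext p
  rw [Tm, J_add (by linarith [rho_nonneg hc hd p]) hf hg, map_add, smul_add, Tm, Tm]

lemma J_Tm (hc : 0 < c) (hd : 0 < d) (hδ : 0 < δ) {γ : ℝ} (hγ : 0 < γ) {f : ℝ → Y}
    (hf : Continuous f) (p : ℕ × ℕ) {t : ℝ} (ht : 0 ≤ t) :
    J γ (Tm c d A B δ f p) t = Tm c d A B (γ + δ) f p t := by
  have hp : 0 < rho c d p + δ := by linarith [rho_nonneg hc hd p]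
  have h := J_clm hγ (J_cont hp hf) (W p • (A ^ p.1 * B ^ p.2)) t
  rw [J_semigroup hγ hp hf ht] at h
  simp only [smul_apply] at h
  have e : γ + (rho c d p + δ) = rho c d p + (γ + δ) := by ring
  rw [e] at h
  exact h

lemma J_S (hc : 0 < c) (hd : 0 < d) (hδ : 0 < δ) {γ : ℝ} (hγ : 0 < γ) {f : ℝ → Y}
    (hf : Continuous f) {t : ℝ} (ht : 0 ≤ t) :
    J γ (S c d A B δ f) t = S c d A B (γ + δ) f t := by
  obtain ⟨M, hM0, hM⟩ := exists_bd hf (|t| + 1)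
  have hs := (bd_summable A B hc hd hδ (T := |t| + 1) (by positivity)).mul_right M
  have h : HasSum (fun p => ∫ u in (0:ℝ)..1, (u ^ (γ - 1)) • Tm c d A B δ f p (t * (1 - u)))
      (∫ u in (0:ℝ)..1, (u ^ (γ - 1)) • S c d A B δ f (t * (1 - u))) := by
    refine intervalIntegral.hasSum_integral_of_dominated_convergence
      (fun p u => u ^ (γ - 1) * (bd c d A B δ (|t| + 1) p * M)) ?_ ?_ ?_ ?_ ?_
    · intro p
      have := (integrand_int hγ (Tm_cont A B hc hd hδ hf p) t).aestronglyMeasurable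
      simpa [Set.uIoc_of_le (zero_le_one (α := ℝ))] using this
    · intro p
      refine Filter.Eventually.of_forall fun u hu => ?_
      rw [Set.uIoc_of_le zero_le_one] at hu
      rw [norm_smul, Real.norm_of_nonneg (Real.rpow_nonneg hu.1.le _)]
      exact mul_le_mul_of_nonneg_left
        (Tm_bound A B hc hd hδ hM ((abs_aux hu).trans (by linarith)) p)
        (Real.rpow_nonneg hu.1.le _)
    · exact Filter.Eventually.of_forall fun u hu => hs.mul_left _
    · simp only [tsum_mul_left]
      exact (pow_int hγ).mul_const _
    · exact Filter.Eventually.of_forall fun u hu => (S_hasSum A B hc hd hδ hf _).const_smul _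
  have h2 := h.const_smul (t ^ γ / Real.Gamma γ)
  have h3 : HasSum (fun p => J γ (Tm c d A B δ f p) t) (J γ (S c d A B δ f) t) := h2
  rw [← h3.tsum_eq, S]
  congr 1
  ext p
  exact J_Tm A B hc hd hδ hγ hf p ht

lemma S_hasDeriv (hc : 0 < c) (hd : 0 < d) (hδ : 0 < δ) {f : ℝ → Y}
    (hf : Continuous f) {t : ℝ} (ht : 0 ≤ t) :
    HasDerivWithinAt (S c d A B (1 + δ) f) (S c d A B δ f t) (Set.Ici 0) t := by
  have hS := S_cont A B hc hd hδ hf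
  have h : HasDerivAt (fun τ => ∫ s in (0:ℝ)..τ, S c d A B δ f s) (S c d A B δ f t) t :=
    (hS.integral_hasStrictDerivAt 0 t).hasDerivAt
  have e : ∀ τ, 0 ≤ τ → S c d A B (1 + δ) f τ = ∫ s in (0:ℝ)..τ, S c d A B δ f s := by
    intro τ hτ
    rw [← J_S A B hc hd hδ one_pos hf hτ, J_one _ hτ]
  exact h.hasDerivWithinAt.congr (fun τ hτ => e τ hτ) (e t ht)

lemma J_one_hasDeriv {f : ℝ → Y} (hf : Continuous f) {t : ℝ} (ht : 0 ≤ t) :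
    HasDerivWithinAt (J 1 f) (f t) (Set.Ici 0) t := by
  have h : HasDerivAt (fun τ => ∫ s in (0:ℝ)..τ, f s) (f t) t :=
    (hf.integral_hasStrictDerivAt 0 t).hasDerivAt
  exact h.hasDerivWithinAt.congr (fun τ hτ => J_one f hτ) (J_one f ht)

lemma S_rec (hAB : A * B = B * A) (hc : 0 < c) (hd : 0 < d) (hδ : 0 < δ) {f : ℝ → Y}
    (hf : Continuous f) (t : ℝ) :
    S c d A B δ f t = J δ f t + A (S c d A B (c + δ) f t) + B (S c d A B (d + δ) f t) := by
  have hA := A.hasSum (S_hasSum A B hc hd (show 0 < c + δ by linarith) hf t)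
  have hB := B.hasSum (S_hasSum A B hc hd (show 0 < d + δ by linarith) hf t)
  let FA : ℕ × ℕ → Y := fun p => match p with
    | (0, _) => 0
    | (k + 1, m) => A (Tm c d A B (c + δ) f (k, m) t)
  let FB : ℕ × ℕ → Y := fun p => match p with
    | (_, 0) => 0
    | (k, m + 1) => B (Tm c d A B (d + δ) f (k, m) t)
  have hFA : HasSum FA (A (S c d A B (c + δ) f t)) := by
    have hi : Function.Injective (fun p : ℕ × ℕ => (p.1 + 1, p.2)) := by
      rintro ⟨a, b⟩ ⟨a', b'⟩ h
      simpa using h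
    refine (hi.hasSum_iff ?_).1 ?_
    · rintro ⟨k, m⟩ hp
      cases k with
      | zero => rfl
      | succ k => exact absurd ⟨(k, m), rfl⟩ hp
    · exact hA
  have hFB : HasSum FB (B (S c d A B (d + δ) f t)) := by
    have hi : Function.Injective (fun p : ℕ × ℕ => (p.1, p.2 + 1)) := by
      rintro ⟨a, b⟩ ⟨a', b'⟩ h
      simpa using h
    refine (hi.hasSum_iff ?_).1 ?_
    · rintro ⟨k, m⟩ hp
      cases m with
      | zero => rfl
      | succ m => exact absurd ⟨(k, m), rfl⟩ hp
    · exact hB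
  have h0 : HasSum (fun p : ℕ × ℕ => if p = (0, 0) then J δ f t else 0) (J δ f t) :=
    hasSum_ite_eq _ _
  have hsum := (h0.add hFA).add hFB
  rw [← hsum.tsum_eq, S]
  congr 1
  have hBA : ∀ k m, B * (A ^ k * B ^ m) = A ^ k * B ^ (m + 1) := by
    intro k m
    have : Commute B (A ^ k) := (show Commute B A from hAB.symm).pow_right k
    rw [← mul_assoc, this.eq, mul_assoc, pow_succ']
  have eA : ∀ k m, A (Tm c d A B (c + δ) f (k, m) t) = W (k, m) •
      ((A ^ (k + 1) * B ^ m) (J (rho c d (k + 1, m) + δ) f t)) := by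
    intro k m
    have : rho c d (k, m) + (c + δ) = rho c d (k + 1, m) + δ := by
      simp only [rho]; push_cast; ring
    rw [Tm, map_smul, this, ← mul_apply_eq_comp, ← mul_assoc, ← pow_succ']
  have eB : ∀ k m, B (Tm c d A B (d + δ) f (k, m) t) = W (k, m) •
      ((A ^ k * B ^ (m + 1)) (J (rho c d (k, m + 1) + δ) f t)) := by
    intro k m
    have : rho c d (k, m) + (d + δ) = rho c d (k, m + 1) + δ := by
      simp only [rho]; push_cast; ring
    rw [Tm, map_smul, this, ← mul_apply_eq_comp, hBA]
  ext ⟨k, m⟩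
  rcases k with _ | k <;> rcases m with _ | m
  · simp [FA, FB, Tm, W, rho]
  · simp only [FA, FB]
    rw [eB, Tm]
    generalize (A ^ 0 * B ^ (m + 1)) (J (rho c d (0, m + 1) + δ) f t) = z
    simp [W]
  · simp only [FA, FB]
    rw [eA, Tm]
    generalize (A ^ (k + 1) * B ^ 0) (J (rho c d (k + 1, 0) + δ) f t) = z
    simp [W]
  · simp only [FA, FB]
    rw [eA, eB, Tm]
    generalize (A ^ (k + 1) * B ^ (m + 1)) (J (rho c d (k + 1, m + 1) + δ) f t) = z
    have : W (k + 1, m + 1) = W (k, m + 1) + W (k + 1, m) := by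
      simp only [W]
      have : (k + 1 + (m + 1)).choose (m + 1)
          = (k + (m + 1)).choose (m + 1) + (k + 1 + m).choose m := by
        rw [show k + 1 + (m + 1) = (k + m + 1) + 1 by ring, Nat.choose_succ_succ,
          show k + (m + 1) = k + m + 1 by ring, show k + 1 + m = k + m + 1 by ring]
        ring
      exact_mod_cast this
    rw [this, add_smul]
    simp

end

lemma S_kernel {c d δ : ℝ} (A B : Y →L[ℝ] Y) [CompleteSpace Y] (hc : 0 < c) (hd : 0 < d)
    (hδ : 1 < δ) {f : ℝ → Y} (hf : Continuous f) {t : ℝ} (ht : 0 ≤ t) :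
    ∫ s in (0:ℝ)..t, (∑' p : ℕ × ℕ, (W p * (t - s) ^ (rho c d p + δ - 1) /
      Real.Gamma (rho c d p + δ)) • ((A ^ p.1 * B ^ p.2) (f s))) = S c d A B δ f t := by
  obtain ⟨M, hM0, hM⟩ := exists_bd hf t
  have hs := (summ (a := ‖A‖) (b := ‖B‖) (δ := δ) (δ - 1) hc hd (norm_nonneg _) (norm_nonneg _)
    (show 0 < t + 1 by linarith) (by linarith)).mul_right M
  have hbd : ∀ p, ∀ s ∈ Set.Ioc 0 t, ‖(W p * (t - s) ^ (rho c d p + δ - 1) /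
      Real.Gamma (rho c d p + δ)) • ((A ^ p.1 * B ^ p.2) (f s))‖
      ≤ W p * (‖A‖ ^ p.1 * ‖B‖ ^ p.2) * ((t + 1) ^ (rho c d p + (δ - 1)) /
        Real.Gamma (rho c d p + δ)) * M := by
    intro p s hs
    have hρ := rho_nonneg hc hd p
    have hG := Real.Gamma_pos_of_pos (show 0 < rho c d p + δ by linarith)
    have hW := W_nonneg p
    have h0 : 0 ≤ t - s := by linarith [hs.2]
    have hp := Real.rpow_nonneg h0 (rho c d p + δ - 1)
    have h1 : (t - s) ^ (rho c d p + δ - 1) ≤ (t + 1) ^ (rho c d p + (δ - 1)) := by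
      rw [← add_sub_assoc]
      exact Real.rpow_le_rpow h0 (by linarith [hs.1]) (by linarith)
    have h2 : ‖(A ^ p.1 * B ^ p.2) (f s)‖ ≤ ‖A‖ ^ p.1 * ‖B‖ ^ p.2 * M :=
      (op_bound A B _ _ _).trans (mul_le_mul_of_nonneg_left
        (hM s (by rw [abs_of_pos hs.1]; exact hs.2)) (by positivity))
    rw [norm_smul, Real.norm_of_nonneg (by positivity)]
    calc _ ≤ (W p * (t + 1) ^ (rho c d p + (δ - 1)) / Real.Gamma (rho c d p + δ)) *
          (‖A‖ ^ p.1 * ‖B‖ ^ p.2 * M) := by gcongr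
      _ = _ := by ring
  have hcont : ∀ p, Continuous fun s => (W p * (t - s) ^ (rho c d p + δ - 1) /
      Real.Gamma (rho c d p + δ)) • ((A ^ p.1 * B ^ p.2) (f s)) := by
    intro p
    have hρ := rho_nonneg hc hd p
    have h1 : Continuous fun s : ℝ => (t - s) ^ (rho c d p + δ - 1) :=
      (Real.continuous_rpow_const (by linarith)).comp (continuous_const.sub continuous_id)
    have h2 : Continuous fun s => (A ^ p.1 * B ^ p.2) (f s) :=
      (A ^ p.1 * B ^ p.2).continuous.comp hf
    exact ((continuous_const.mul h1).div_const _).smul h2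
  have h : HasSum (fun p => ∫ s in (0:ℝ)..t, (W p * (t - s) ^ (rho c d p + δ - 1) /
      Real.Gamma (rho c d p + δ)) • ((A ^ p.1 * B ^ p.2) (f s)))
      (∫ s in (0:ℝ)..t, (∑' p : ℕ × ℕ, (W p * (t - s) ^ (rho c d p + δ - 1) /
      Real.Gamma (rho c d p + δ)) • ((A ^ p.1 * B ^ p.2) (f s)))) := by
    refine intervalIntegral.hasSum_integral_of_dominated_convergence
      (fun p _ => W p * (‖A‖ ^ p.1 * ‖B‖ ^ p.2) * ((t + 1) ^ (rho c d p + (δ - 1)) /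
        Real.Gamma (rho c d p + δ)) * M) ?_ ?_ ?_ ?_ ?_
    · exact fun p => (hcont p).aestronglyMeasurable
    · intro p
      refine Filter.Eventually.of_forall fun s hs => ?_
      rw [Set.uIoc_of_le ht] at hs
      exact hbd p s hs
    · exact Filter.Eventually.of_forall fun s _ => hs
    · exact intervalIntegrable_const
    · refine Filter.Eventually.of_forall fun s hs' => ?_
      rw [Set.uIoc_of_le ht] at hs'
      exact (Summable.of_norm_bounded hs fun p => hbd p s hs').hasSum
  rw [← h.tsum_eq, S]
  congr 1
  ext p
  have hρ := rho_nonneg hc hd p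
  have hp : 0 < rho c d p + δ := by linarith
  rw [Tm, ← J_eq hp f ht, map_smul, ← ContinuousLinearMap.intervalIntegral_comp_comm, smul_smul,
    ← intervalIntegral.integral_smul]
  · congr 1
    ext s
    rw [map_smul, smul_smul]
    congr 1
    ring
  · apply Continuous.intervalIntegrable
    exact ((Real.continuous_rpow_const (by linarith)).comp
      (continuous_const.sub continuous_id)).smul hf

lemma S_const1 {c d δ : ℝ} (A B : Y →L[ℝ] Y) [CompleteSpace Y] (hc : 0 < c) (hd : 0 < d)
    (hδ : 0 < δ) (y : Y) (t : ℝ) :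
    ∑' p : ℕ × ℕ, (W p * t ^ (rho c d p + δ) / Real.Gamma (rho c d p + δ + 1)) •
      ((A ^ p.1 * B ^ p.2) y) = S c d A B δ (fun _ => y) t := by
  rw [S]
  congr 1
  ext p
  rw [Tm, J_const (by linarith [rho_nonneg hc hd p]), map_smul, smul_smul]
  congr 1
  ring

end FracAux

open FracAux
/-- The mild solution of the inhomogeneous multi-term fractional evolution equation with
permutable operators (`AB = BA`), expressed through bivariate Mittag-Leffler type series with
binomial coefficients, satisfies `x(0) = η`, `x'(0) = η̂`, its Caputo derivatives of orders
`α ∈ (1,2)` and `β ∈ (0,1)` exist for `t > 0`, and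
`(ᶜD^α x)(t) − A (ᶜD^β x)(t) = B x(t) + g(t)`. -/
theorem inhomogeneous_mild_solution_permutable {Y : Type*} [NormedAddCommGroup Y]
    [NormedSpace ℝ Y] [CompleteSpace Y] (A B : Y →L[ℝ] Y)
    (hAB : A * B = B * A) (α β : ℝ)
    (hα1 : 1 < α) (hα2 : α < 2) (hβ0 : 0 < β) (hβ1 : β < 1) (η ηh : Y)
    (g : ℝ → Y) (hg : ContinuousOn g (Set.Ici 0)) (x : ℝ → Y)
    (hx : ∀ t : ℝ, 0 ≤ t → x t = η
      + (∑' p : ℕ × ℕ, (((p.1 + p.2).choose p.2 : ℝ) *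
          t ^ ((p.1 : ℝ) * (α - β) + (p.2 : ℝ) * α + α) /
          Real.Gamma ((p.1 : ℝ) * (α - β) + (p.2 : ℝ) * α + α + 1)) •
            ((A ^ p.1 * B ^ (p.2 + 1)) η))
      + (∑' p : ℕ × ℕ, (((p.1 + p.2).choose p.2 : ℝ) *
          t ^ ((p.1 : ℝ) * (α - β) + (p.2 : ℝ) * α + 1) /
          Real.Gamma ((p.1 : ℝ) * (α - β) + (p.2 : ℝ) * α + 2)) •
            ((A ^ p.1 * B ^ p.2) ηh))
      + ∫ s in (0:ℝ)..t,
          (∑' p : ℕ × ℕ, (((p.1 + p.2).choose p.2 : ℝ) *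
            (t - s) ^ ((p.1 : ℝ) * (α - β) + (p.2 : ℝ) * α + α - 1) /
            Real.Gamma ((p.1 : ℝ) * (α - β) + (p.2 : ℝ) * α + α)) •
              ((A ^ p.1 * B ^ p.2) (g s)))) :
    x 0 = η ∧
    HasDerivWithinAt x ηh (Set.Ici 0) 0 ∧
    ∃ Iα' Dα Dβ : ℝ → Y,
      (∀ t : ℝ, 0 < t → HasDerivWithinAt
        (fun τ => (Real.Gamma (2 - α))⁻¹ •
          ∫ s in (0:ℝ)..τ, ((τ - s) ^ (1 - α)) • (x s - η - s • ηh))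
        (Iα' t) (Set.Ici 0) t) ∧
      (∀ t : ℝ, 0 < t → HasDerivWithinAt Iα' (Dα t) (Set.Ici 0) t) ∧
      (∀ t : ℝ, 0 < t → HasDerivWithinAt
        (fun τ => (Real.Gamma (1 - β))⁻¹ •
          ∫ s in (0:ℝ)..τ, ((τ - s) ^ (-β)) • (x s - η))
        (Dβ t) (Set.Ici 0) t) ∧
      (∀ t : ℝ, 0 < t → Dα t - A (Dβ t) = B (x t) + g t) := by
  
  have hc : 0 < α - β := by linarith
  have hd : 0 < α := by linarith
  set c := α - β with hcdef
  set gt : ℝ → Y := fun s => g (max s 0) with hgt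
  have hgtc : Continuous gt := hg.comp_continuous (by fun_prop) (fun s => Set.mem_Ici.2 (le_max_right _ _))
  have hgte : ∀ s, 0 ≤ s → gt s = g s := fun s hs => by simp only [hgt, max_eq_left hs]
  set f : ℝ → Y := fun s => B η + gt s with hf
  have hfc : Continuous f := continuous_const.add hgtc
  have hkc : Continuous (fun _ : ℝ => ηh) := continuous_const
  have hxt : ∀ t, 0 ≤ t → x t = η + S c α A B 1 (fun _ => ηh) t + S c α A B α f t := by
    intro t ht
    have h1 := S_const1 A B hc hd hd (B η) t
    have h2 := S_const1 A B hc hd one_pos ηh t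
    have h3 := S_kernel A B hc hd hα1 hgtc ht
    have h4 := S_add A B hc hd hd (f := fun _ => B η) continuous_const hgtc t
    rw [h4, ← h1, ← h2, ← h3, hx t ht, add_assoc η, add_comm (tsum _), add_assoc, add_assoc,
      add_assoc]
    congr 1
    congr 1
    · congr 1
      ext p
      simp only [W, rho]
      rw [add_assoc _ (1:ℝ) 1]
      norm_num
    congr 1
    refine intervalIntegral.integral_congr fun s hs => ?_
    rw [Set.uIcc_of_le ht] at hs
    simp only [hgte s hs.1, W, rho]
  have hJ1 : ∀ s, J 1 (fun _ => ηh) s = s • ηh := by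
    intro s
    rw [J_const one_pos]
    norm_num
  have hxt2 : ∀ t, 0 ≤ t → x t - η - t • ηh = A (S c α A B (c + 1) (fun _ => ηh) t)
      + B (S c α A B (α + 1) (fun _ => ηh) t) + S c α A B α f t := by
    intro t ht
    rw [hxt t ht, S_rec A B hAB hc hd one_pos hkc t, hJ1]
    abel
  have hd1 : 0 < α - 1 := by linarith
  have hb1 : 0 < 1 - β := by linarith
  have ha2 : 0 < 2 - α := by linarith
  have hSc : ∀ {δ : ℝ} {h : ℝ → Y}, 0 < δ → Continuous h → Continuous (S c α A B δ h) :=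
    fun hδ hh => S_cont A B hc hd hδ hh
  have hder : ∀ {δ : ℝ} {h : ℝ → Y}, 0 < δ → Continuous h → ∀ {t : ℝ}, 0 ≤ t → ∀ δ', δ' = 1 + δ →
      HasDerivWithinAt (S c α A B δ' h) (S c α A B δ h t) (Set.Ici 0) t := by
    intro δ h hδ hh t ht δ' e
    subst e
    exact S_hasDeriv A B hc hd hδ hh ht
  have clmd : ∀ (L : Y →L[ℝ] Y) {h : ℝ → Y} {h' : Y} {t : ℝ},
      HasDerivWithinAt h h' (Set.Ici 0) t →
      HasDerivWithinAt (fun s => L (h s)) (L h') (Set.Ici 0) t := fun L _ _ _ hh =>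
    L.hasFDerivAt.comp_hasDerivWithinAt _ hh
  refine ⟨?_, ?_, fun t => A (S c α A B (1 + (1 - β)) (fun _ => ηh) t)
      + B (S c α A B (1 + 1) (fun _ => ηh) t) + S c α A B 1 f t,
    fun t => A (S c α A B (1 - β) (fun _ => ηh) t)
      + B (S c α A B 1 (fun _ => ηh) t) + (f t + A (S c α A B c f t) + B (S c α A B α f t)),
    fun t => S c α A B (1 - β) (fun _ => ηh) t + S c α A B c f t, ?_, ?_, ?_, ?_⟩
  · rw [hxt 0 le_rfl, S_zero A B hc hd one_pos, S_zero A B hc hd hd]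
    simp
  · have e : ∀ t, 0 ≤ t → x t = η + (J 1 (fun _ => ηh) t
        + (A (S c α A B (c + 1) (fun _ => ηh) t)
        + B (S c α A B (α + 1) (fun _ => ηh) t) + S c α A B α f t)) := by
      intro t ht
      rw [hJ1, ← hxt2 t ht]
      abel
    have h := ((J_one_hasDeriv hkc le_rfl).add
      (((clmd A (hder hc hkc (le_refl (0:ℝ)) (c + 1) (by ring))).add
        (clmd B (hder hd hkc (le_refl (0:ℝ)) (α + 1) (by ring)))).add
        (hder hd1 hfc (le_refl (0:ℝ)) α (by ring)))).const_add η
    rw [S_zero A B hc hd hc, S_zero A B hc hd hd, S_zero A B hc hd hd1] at h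
    simp only [map_zero, add_zero] at h
    exact h.congr (fun t ht => e t ht) (e 0 le_rfl)
  · intro t ht
    have e : ∀ τ, 0 ≤ τ → (Real.Gamma (2 - α))⁻¹ •
          (∫ s in (0:ℝ)..τ, ((τ - s) ^ (1 - α)) • (x s - η - s • ηh))
        = A (S c α A B (2 - α + (c + 1)) (fun _ => ηh) τ)
          + B (S c α A B (2 - α + (α + 1)) (fun _ => ηh) τ) + S c α A B (2 - α + α) f τ := by
      intro τ hτ
      rw [show 1 - α = 2 - α - 1 by ring, J_eq ha2 (fun s => x s - η - s • ηh) hτ,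
        J_congr hτ hxt2]
      have c1 := hSc (δ := c + 1) (by linarith) hkc
      have c2 := hSc (δ := α + 1) (by linarith) hkc
      have c3 := hSc hd hfc
      have c1' : Continuous fun s => A (S c α A B (c + 1) (fun _ => ηh) s) := A.continuous.comp c1
      have c2' : Continuous fun s => B (S c α A B (α + 1) (fun _ => ηh) s) := B.continuous.comp c2
      have c12 : Continuous fun s => A (S c α A B (c + 1) (fun _ => ηh) s)
          + B (S c α A B (α + 1) (fun _ => ηh) s) := c1'.add c2'
      rw [J_add ha2 c12 c3, J_add ha2 c1' c2', J_clm ha2 c1, J_clm ha2 c2,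
        J_S A B hc hd (by linarith) ha2 hkc hτ, J_S A B hc hd (by linarith) ha2 hkc hτ,
        J_S A B hc hd hd ha2 hfc hτ]
    refine HasDerivWithinAt.congr ?_ (fun τ hτ => e τ hτ) (e t ht.le)
    exact ((clmd A (hder (by linarith) hkc ht.le _ (by rw [hcdef]; ring))).add
      (clmd B (hder (by norm_num) hkc ht.le _ (by ring)))).add (hder one_pos hfc ht.le _ (by ring))
  · intro t ht
    have e : ∀ τ, 0 ≤ τ → A (S c α A B (1 + (1 - β)) (fun _ => ηh) τ)
      + B (S c α A B (1 + 1) (fun _ => ηh) τ) + S c α A B 1 f τ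
      = A (S c α A B (1 + (1 - β)) (fun _ => ηh) τ)
      + B (S c α A B (1 + 1) (fun _ => ηh) τ) + (J 1 f τ + A (S c α A B (c + 1) f τ)
        + B (S c α A B (α + 1) f τ)) := by
      intro τ hτ
      rw [S_rec A B hAB hc hd one_pos hfc τ]
    refine HasDerivWithinAt.congr ?_ (fun τ hτ => e τ hτ) (e t ht.le)
    exact ((clmd A (hder hb1 hkc ht.le _ rfl)).add (clmd B (hder one_pos hkc ht.le _ rfl))).add
      (((J_one_hasDeriv hfc ht.le).add (clmd A (hder hc hfc ht.le _ (by ring)))).add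
        (clmd B (hder hd hfc ht.le _ (by ring))))
  · intro t ht
    have e : ∀ τ, 0 ≤ τ → (Real.Gamma (1 - β))⁻¹ •
          (∫ s in (0:ℝ)..τ, ((τ - s) ^ (-β)) • (x s - η))
        = S c α A B (1 - β + 1) (fun _ => ηh) τ + S c α A B (1 - β + α) f τ := by
      intro τ hτ
      rw [show -β = 1 - β - 1 by ring, J_eq hb1 (fun s => x s - η) hτ,
        J_congr (g := fun s => S c α A B 1 (fun _ => ηh) s + S c α A B α f s) hτ
          (fun s hs => by rw [hxt s hs]; abel),
        J_add hb1 (hSc one_pos hkc) (hSc hd hfc),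
        J_S A B hc hd one_pos hb1 hkc hτ, J_S A B hc hd hd hb1 hfc hτ]
    refine HasDerivWithinAt.congr ?_ (fun τ hτ => e τ hτ) (e t ht.le)
    exact (hder hb1 hkc ht.le _ (by ring)).add (hder hc hfc ht.le _ (by rw [hcdef]; ring))
  · intro t ht
    rw [hxt t ht.le]
    simp only [hf, hgte t ht.le, map_add]
    abel
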